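/- There is an absolute constant C > 0 such that for every finite set S ⊂ ℝ² and every integer t ≥ 2, the number of lines containing at least t points of S satisfies |L_t(S)| ≤ C·( |S|²/t³ + |S|/t ), where L_t(S) := { ℓ a line in ℝ² : |ℓ ∩ S| ≥ t }. -/

import Mathlib

/-!
Choose affine coordinates in which no two points of `S` share an abscissa and no point of `S`
falls on the image of a connecting line unless it lies on that line; the rich lines become graphs
`y = a x + b`. Cut each of them at the points of `S` into segments joining consecutive points. This
draws a graph with `|S|` vertices, at least `|L| (t - 1)` edges and at most `|L|²` crossing pairs.

A straight-line drawing without crossings has at most `3 |V|` edges: an edge that is neither the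
uppermost one at its left endpoint nor the uppermost one at its right endpoint is the first edge
met when going down from some vertex. Removing the edges that cross gives `|E| ≤ 3 |V| + |X|`, with
`X` the set of crossing pairs. Applying this to a random set of vertices, each kept with probability
`6 |V| / |E|`, gives the crossing lemma `|E|³ ≤ 72 |V|² |X|`, which is then compared with the
counts above.
-/

namespace SzemerediTrotter

open Finset

/-! ### Rich lines -/

section RichLines

variable {K V P : Type*} [Field K] [AddCommGroup V] [Module K V] [AddTorsor V P]

variable (K) in
/-- The set of `t`-rich lines of `S`, which is `L_t(S)` in the paper. The junk value `0` of
`Set.ncard` at infinite sets does not occur, since `S` is finite. -/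
def richLines (S : Finset P) (t : ℕ) : Set (AffineSubspace K P) :=
  {ℓ | (∃ p q : P, p ≠ q ∧ ℓ = affineSpan K {p, q}) ∧
    t ≤ {x ∈ (S : Set P) | x ∈ ℓ}.ncard}

variable {S : Finset P} {t : ℕ} {ℓ ℓ' : AffineSubspace K P}

lemma eq_affineSpan_pair_of_mem_richLines {p q : P} (hℓ : ℓ ∈ richLines K S t) (hp : p ∈ ℓ)
    (hq : q ∈ ℓ) (hpq : p ≠ q) : ℓ = line[K, p, q] := by
  obtain ⟨⟨p', q', -, rfl⟩, -⟩ := hℓ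
  exact (affineSpan_pair_eq_of_mem_of_mem_of_ne hp hq hpq).symm

lemma exists_eq_affineSpan_pair_of_mem_richLines (ht : 2 ≤ t) (hℓ : ℓ ∈ richLines K S t) :
    ∃ p ∈ S, ∃ q ∈ S, p ≠ q ∧ ℓ = line[K, p, q] := by
  obtain ⟨p, ⟨hp, hpℓ⟩, q, ⟨hq, hqℓ⟩, hpq⟩ :=
    (Set.one_lt_ncard (S.finite_toSet.sep (· ∈ ℓ))).1 (ht.trans hℓ.2)
  exact ⟨p, hp, q, hq, hpq, eq_affineSpan_pair_of_mem_richLines hℓ hpℓ hqℓ hpq⟩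

lemma eq_of_mem_richLines_of_forall_mem (ht : 2 ≤ t) (hℓ : ℓ ∈ richLines K S t)
    (hℓ' : ℓ' ∈ richLines K S t) (h : ∀ r ∈ S, r ∈ ℓ → r ∈ ℓ') : ℓ = ℓ' := by
  obtain ⟨p, hp, q, hq, hpq, rfl⟩ := exists_eq_affineSpan_pair_of_mem_richLines ht hℓ
  exact (eq_affineSpan_pair_of_mem_richLines hℓ' (h p hp (left_mem_affineSpan_pair K p q))
    (h q hq (right_mem_affineSpan_pair K p q)) hpq).symm

lemma finite_richLines (S : Finset P) (ht : 2 ≤ t) : (richLines K S t).Finite := by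
  refine ((S.finite_toSet.prod S.finite_toSet).image fun p ↦ line[K, p.1, p.2]).subset
    fun ℓ hℓ ↦ ?_
  obtain ⟨p, hp, q, hq, -, rfl⟩ := exists_eq_affineSpan_pair_of_mem_richLines ht hℓ
  exact ⟨(p, q), ⟨hp, hq⟩, rfl⟩

end RichLines

/-! ### Non-vertical lines -/

/-- A non-vertical line in the plane `K × K`, encoded by its equation. -/
@[ext]
structure NonVerticalLine (K : Type*) where
  slope : K
  intercept : K

namespace NonVerticalLine

section Field

variable {K : Type*} [Field K] {l m : NonVerticalLine K} {x y : K}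

/-- The affine function of which the line is the graph. -/
def eval (l : NonVerticalLine K) (x : K) : K := l.slope * x + l.intercept

instance : CoeFun (NonVerticalLine K) fun _ ↦ K → K := ⟨eval⟩

lemma eq_of_slope_eq_of_apply_eq (hs : l.slope = m.slope) (hx : l x = m x) : l = m := by
  rw [eval, eval, hs] at hx
  exact NonVerticalLine.ext hs (add_left_cancel hx)

lemma apply_sub_apply_eq_mul (hx : l x = m x) (y : K) :
    m y - l y = (m.slope - l.slope) * (y - x) := by
  simp only [eval] at hx ⊢
  linear_combination -hx

lemma eq_of_apply_eq_of_apply_eq (hxy : x ≠ y) (hx : l x = m x) (hy : l y = m y) : l = m := by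
  have hmul : (m.slope - l.slope) * (y - x) = 0 := by
    rw [← apply_sub_apply_eq_mul hx, hy, sub_self]
  have hs : m.slope = l.slope :=
    sub_eq_zero.1 ((mul_eq_zero.1 hmul).resolve_right (sub_ne_zero.2 hxy.symm))
  exact eq_of_slope_eq_of_apply_eq hs.symm hx

end Field

variable {K : Type*} [Field K] [LinearOrder K] [IsStrictOrderedRing K]
  {l m : NonVerticalLine K} {x y u w : K}

lemma apply_lt_apply_iff_of_lt_of_apply_eq (hxy : x < y) (hx : l x = m x) :
    l y < m y ↔ l.slope < m.slope := by
  rw [← sub_pos, apply_sub_apply_eq_mul hx, mul_pos_iff_of_pos_right (sub_pos.2 hxy), sub_pos]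

lemma apply_lt_apply_iff_of_gt_of_apply_eq (hyx : y < x) (hx : l x = m x) :
    l y < m y ↔ m.slope < l.slope := by
  rw [← sub_pos, apply_sub_apply_eq_mul hx, ← neg_mul_neg, neg_sub, neg_sub,
    mul_pos_iff_of_pos_right (sub_pos.2 hyx), sub_pos]

lemma exists_mem_Ioo_apply_eq (huw : u < w) (hu : m u < l u) (hw : l w < m w) :
    ∃ y ∈ Set.Ioo u w, l y = m y := by
  obtain ⟨a, ha⟩ : ∃ a, a = l u - m u := ⟨_, rfl⟩
  obtain ⟨b, hb⟩ : ∃ b, b = m w - l w := ⟨_, rfl⟩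
  have ha0 : 0 < a := ha ▸ sub_pos.2 hu
  have hb0 : 0 < b := hb ▸ sub_pos.2 hw
  have hab : 0 < a + b := add_pos ha0 hb0
  refine ⟨(b * u + a * w) / (a + b), ⟨?_, ?_⟩, ?_⟩
  · rw [lt_div_iff₀ hab]
    linarith [mul_lt_mul_of_pos_left huw ha0]
  · rw [div_lt_iff₀ hab]
    linarith [mul_lt_mul_of_pos_left huw hb0]
  · simp only [eval] at ha hb ⊢
    field_simp
    linear_combination a * hb - b * ha

end NonVerticalLine

/-! ### Generic coordinates -/

section GenericCoordinates

variable {K V P : Type*} [Field K] [AddCommGroup V] [Module K V]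

lemma exists_dual_forall_eq_zero [Infinite K] {ι : Type*} [Finite ι] (v : ι → V) :
    ∃ f : Module.Dual K V, ∀ i, f (v i) = 0 → v i = 0 := by
  obtain ⟨f, hf⟩ := Module.exists_dual_forall_apply_ne_zero (K := K)
    (fun i : {i // v i ≠ 0} ↦ v i) fun i ↦ i.2
  exact ⟨f, fun i hi ↦ by_contra fun hne ↦ hf ⟨i, hne⟩ hi⟩

variable [AddTorsor V P]

lemma mem_affineSpan_pair_iff_of_apply_ne_zero (f : Module.Dual K V) {p q r : P}
    (hpq : f (q -ᵥ p) ≠ 0) :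
    r ∈ line[K, p, q] ↔ f (q -ᵥ p) • (r -ᵥ p) - f (r -ᵥ p) • (q -ᵥ p) = 0 := by
  nth_rw 1 [← vsub_vadd r p]
  rw [vadd_left_mem_affineSpan_pair, sub_eq_zero]
  refine ⟨?_, fun h ↦ ⟨f (r -ᵥ p) / f (q -ᵥ p), ?_⟩⟩
  · rintro ⟨c, hc⟩
    rw [← hc, map_smul, smul_smul, smul_eq_mul, mul_comm]
  · rw [div_eq_inv_mul, mul_smul, ← h, inv_smul_smul₀ hpq]

variable (K) in
lemma exists_generic_dual_pair [Infinite K] (S : Finset P) :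
    ∃ f g : Module.Dual K V, (∀ p ∈ S, ∀ q ∈ S, f (q -ᵥ p) = 0 → p = q) ∧
      ∀ p ∈ S, ∀ q ∈ S, ∀ r ∈ S, g (f (q -ᵥ p) • (r -ᵥ p) - f (r -ᵥ p) • (q -ᵥ p)) = 0 →
        f (q -ᵥ p) • (r -ᵥ p) - f (r -ᵥ p) • (q -ᵥ p) = 0 := by
  obtain ⟨f, hf⟩ := exists_dual_forall_eq_zero (K := K) fun i : S × S ↦ i.2.1 -ᵥ i.1.1
  obtain ⟨g, hg⟩ := exists_dual_forall_eq_zero (K := K) fun i : S × S × S ↦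
    f (i.2.1.1 -ᵥ i.1.1) • (i.2.2.1 -ᵥ i.1.1) - f (i.2.2.1 -ᵥ i.1.1) • (i.2.1.1 -ᵥ i.1.1)
  exact ⟨f, g, fun p hp q hq h ↦ (vsub_eq_zero_iff_eq.1 (hf (⟨p, hp⟩, ⟨q, hq⟩) h)).symm,
    fun p hp q hq r hr ↦ hg (⟨p, hp⟩, ⟨q, hq⟩, ⟨r, hr⟩)⟩

lemma exists_nonVerticalLine_apply_eq_iff (f g : Module.Dual K V) (o : P) {p q : P}
    (hpq : f (q -ᵥ p) ≠ 0) : ∃ l : NonVerticalLine K, ∀ r,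
      g (f (q -ᵥ p) • (r -ᵥ p) - f (r -ᵥ p) • (q -ᵥ p)) = 0 ↔ g (r -ᵥ o) = l (f (r -ᵥ o)) := by
  refine ⟨⟨g (q -ᵥ p) / f (q -ᵥ p), g (p -ᵥ o) - g (q -ᵥ p) / f (q -ᵥ p) * f (p -ᵥ o)⟩,
    fun r ↦ ?_⟩
  calc g (f (q -ᵥ p) • (r -ᵥ p) - f (r -ᵥ p) • (q -ᵥ p)) = 0
      ↔ g (r -ᵥ p) = g (q -ᵥ p) / f (q -ᵥ p) * f (r -ᵥ p) := by
        rw [map_sub, map_smul, map_smul, smul_eq_mul, smul_eq_mul, sub_eq_zero]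
        field_simp
    _ ↔ g (r -ᵥ o) = NonVerticalLine.eval _ (f (r -ᵥ o)) := by
        rw [← vsub_sub_vsub_cancel_right r p o, map_sub, map_sub, NonVerticalLine.eval,
          sub_eq_iff_eq_add]
        ring_nf

lemma exists_coordinates [Infinite K] (S : Finset P) :
    ∃ φ : P → K × K, Set.InjOn φ S ∧ ∀ p ∈ S, ∀ q ∈ S, p ≠ q →
      ∃ l : NonVerticalLine K, ∀ r ∈ S, r ∈ line[K, p, q] ↔ (φ r).2 = l (φ r).1 := by
  obtain ⟨f, g, hf, hg⟩ := exists_generic_dual_pair K S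
  obtain ⟨o⟩ : Nonempty P := inferInstance
  refine ⟨fun p ↦ (f (p -ᵥ o), g (p -ᵥ o)), fun p hp q hq hpq ↦ hf p hp q hq ?_,
    fun p hp q hq hpq ↦ ?_⟩
  · rw [← vsub_sub_vsub_cancel_right q p o, map_sub, sub_eq_zero]
    exact (congrArg Prod.fst hpq).symm
  · have hne : f (q -ᵥ p) ≠ 0 := fun h ↦ hpq (hf p hp q hq h)
    obtain ⟨l, hl⟩ := exists_nonVerticalLine_apply_eq_iff f g o hne
    refine ⟨l, fun r hr ↦ ?_⟩
    rw [← hl r, mem_affineSpan_pair_iff_of_apply_ne_zero f hne]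
    exact ⟨fun h ↦ by rw [h, map_zero], hg p hp q hq r hr⟩

lemma exists_coordinates_richLines [Infinite K] (S : Finset P) {t : ℕ} (ht : 2 ≤ t) :
    ∃ (φ : P → K × K) (graph : richLines K S t → NonVerticalLine K), Set.InjOn φ S ∧
      graph.Injective ∧ ∀ ℓ, ∀ r ∈ S, r ∈ ℓ.1 ↔ (φ r).2 = graph ℓ (φ r).1 := by
  obtain ⟨φ, hφ, hline⟩ := exists_coordinates (K := K) S
  have hgraph (ℓ : richLines K S t) :
      ∃ l : NonVerticalLine K, ∀ r ∈ S, r ∈ ℓ.1 ↔ (φ r).2 = l (φ r).1 := by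
    obtain ⟨p, hp, q, hq, hpq, hℓ⟩ := exists_eq_affineSpan_pair_of_mem_richLines ht ℓ.2
    exact hℓ ▸ hline p hp q hq hpq
  choose graph hgraph using hgraph
  refine ⟨φ, graph, hφ, fun ℓ ℓ' h ↦ Subtype.ext ?_, hgraph⟩
  refine eq_of_mem_richLines_of_forall_mem ht ℓ.2 ℓ'.2 fun r hr hrℓ ↦ ?_
  rwa [hgraph ℓ' r hr, ← h, ← hgraph ℓ r hr]

end GenericCoordinates

/-! ### Straight-line drawings -/

/-- An edge of a straight-line drawing in `K × K`: the part of a non-vertical line over the interval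
`[left, right]`. -/
@[ext]
structure Edge (K : Type*) [LT K] where
  line : NonVerticalLine K
  left : K
  right : K
  left_lt_right : left < right

variable {K : Type*} [Field K] [LinearOrder K]

namespace Edge

/-- The left endpoint of an edge. -/
def leftPt (e : Edge K) : K × K := (e.left, e.line e.left)

/-- The right endpoint of an edge. -/
def rightPt (e : Edge K) : K × K := (e.right, e.line e.right)

/-- The two endpoints of an edge. -/
def endpoints (e : Edge K) : Finset (K × K) := {e.leftPt, e.rightPt}

/-- The relative interior of an edge: its points other than the endpoints. -/
def interior (e : Edge K) : Set (K × K) :=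
  {v | v.1 ∈ Set.Ioo e.left e.right ∧ v.2 = e.line v.1}

/-- Two different edges cross if their relative interiors meet. Sharing an endpoint is not a
crossing; overlapping in a segment is. -/
def Crosses (e g : Edge K) : Prop := e ≠ g ∧ (e.interior ∩ g.interior).Nonempty

variable {e g : Edge K} {v : K × K} {x : K}

lemma crosses_of_apply_eq (hne : e ≠ g) (hxe : x ∈ Set.Ioo e.left e.right)
    (hxg : x ∈ Set.Ioo g.left g.right) (hx : e.line x = g.line x) : e.Crosses g :=
  ⟨hne, (x, e.line x), ⟨hxe, rfl⟩, hxg, hx⟩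

lemma snd_eq_apply_of_mem_endpoints (hv : v ∈ e.endpoints) : v.2 = e.line v.1 := by
  rcases mem_insert.1 hv with rfl | hv
  · rfl
  · rw [mem_singleton.1 hv]
    rfl

lemma fst_notMem_Ioo_of_mem_endpoints (hv : v ∈ e.endpoints) :
    v.1 ∉ Set.Ioo e.left e.right := by
  rcases mem_insert.1 hv with rfl | hv
  · simp [leftPt]
  · simp [mem_singleton.1 hv, rightPt]

lemma card_endpoints (e : Edge K) : #e.endpoints = 2 :=
  card_pair fun h ↦ e.left_lt_right.ne (congrArg Prod.fst h)

end Edge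

/-- A straight-line drawing with vertex set `V` and edge set `E`. Edges may cross but do not pass
through vertices. -/
structure IsDrawing (V : Finset (K × K)) (E : Finset (Edge K)) : Prop where
  leftPt_mem : ∀ e ∈ E, e.leftPt ∈ V
  rightPt_mem : ∀ e ∈ E, e.rightPt ∈ V
  notMem_interior : ∀ e ∈ E, ∀ v ∈ V, v ∉ e.interior

/-- A straight-line drawing in which no two edges cross. -/
structure IsPlaneDrawing (V : Finset (K × K)) (E : Finset (Edge K)) : Prop
    extends IsDrawing V E where
  not_crosses : ∀ e ∈ E, ∀ g ∈ E, ¬ e.Crosses g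

variable {V : Finset (K × K)} {E : Finset (Edge K)} {e e' g : Edge K}

/-! ### Plane drawings have at most `3 |V|` edges -/

/-- No edge has the same left endpoint as `e` and leaves it above `e`. -/
def UppermostAtLeft (E : Finset (Edge K)) (e : Edge K) : Prop :=
  ∀ g ∈ E, g.leftPt = e.leftPt → g.line.slope ≤ e.line.slope

/-- No edge has the same right endpoint as `e` and arrives there above `e`. -/
def UppermostAtRight (E : Finset (Edge K)) (e : Edge K) : Prop :=
  ∀ g ∈ E, g.rightPt = e.rightPt → e.line.slope ≤ g.line.slope

/-- The edge passes strictly below the point `v`. -/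
def Edge.PassesBelow (e : Edge K) (v : K × K) : Prop :=
  v.1 ∈ Set.Ioo e.left e.right ∧ e.line v.1 < v.2

/-- The edge `e` is the first one met when going down from the point `v`. -/
def UppermostBelow (E : Finset (Edge K)) (v : K × K) (e : Edge K) : Prop :=
  e.PassesBelow v ∧ ∀ g ∈ E, g.PassesBelow v → g.line v.1 ≤ e.line v.1

/-- The edge `e'` follows `e` in counterclockwise order among the edges leaving the left endpoint of
`e` to the right. -/
structure IsNextAbove (E : Finset (Edge K)) (e e' : Edge K) : Prop where
  mem : e' ∈ E
  leftPt_eq : e'.leftPt = e.leftPt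
  slope_lt : e.line.slope < e'.line.slope
  slope_le : ∀ g ∈ E, g.leftPt = e.leftPt → e.line.slope < g.line.slope →
    e'.line.slope ≤ g.line.slope

/-- The points between `e` and `e'`, boundary included and apex excluded, up to the abscissa where
the shorter of the two edges ends. It is meant for edges with a common left endpoint. -/
def wedge (e e' : Edge K) : Set (K × K) :=
  {v | v.1 ∈ Set.Ioc e.left (min e.right e'.right) ∧ v.2 ∈ Set.Icc (e.line v.1) (e'.line v.1)}

lemma exists_isNextAbove (he : ¬ UppermostAtLeft E e) : ∃ e', IsNextAbove E e e' := by
  classical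
  simp only [UppermostAtLeft, not_forall, not_le] at he
  obtain ⟨g, hg, hge, hlt⟩ := he
  obtain ⟨e', he', hmin⟩ := exists_min_image
    {g ∈ E | g.leftPt = e.leftPt ∧ e.line.slope < g.line.slope} (·.line.slope)
    ⟨g, by simp [hg, hge, hlt]⟩
  obtain ⟨hmem, hleft, hslope⟩ := mem_filter.1 he'
  exact ⟨e', hmem, hleft, hslope, fun g hg h h' ↦ hmin g (by simp [hg, h, h'])⟩

namespace IsNextAbove

lemma left_eq (h : IsNextAbove E e e') : e'.left = e.left :=
  congrArg Prod.fst h.leftPt_eq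

lemma apply_left_eq (h : IsNextAbove E e e') : e.line e.left = e'.line e.left := by
  conv_rhs => rw [← h.left_eq]
  exact (congrArg Prod.snd h.leftPt_eq).symm

variable [IsStrictOrderedRing K]

lemma apply_lt_apply {x : K} (h : IsNextAbove E e e') (hx : e.left < x) :
    e.line x < e'.line x :=
  (NonVerticalLine.apply_lt_apply_iff_of_lt_of_apply_eq hx h.apply_left_eq).2 h.slope_lt

lemma exists_mem_wedge (h : IsNextAbove E e e') (hD : IsDrawing V E) (he : e ∈ E) :
    ∃ v ∈ V, v ∈ wedge e e' := by
  rcases le_total e.right e'.right with hle | hle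
  · refine ⟨e.rightPt, hD.rightPt_mem e he, ⟨e.left_lt_right, le_min le_rfl hle⟩, le_rfl, ?_⟩
    exact (h.apply_lt_apply e.left_lt_right).le
  · have hlt : e.left < e'.right := h.left_eq ▸ e'.left_lt_right
    refine ⟨e'.rightPt, hD.rightPt_mem e' h.mem, ⟨hlt, le_min hle le_rfl⟩, ?_, le_rfl⟩
    exact (h.apply_lt_apply hlt).le

lemma exists_first_mem_wedge (h : IsNextAbove E e e') (hD : IsDrawing V E) (he : e ∈ E) :
    ∃ r ∈ V, r ∈ wedge e e' ∧ ∀ v ∈ V, v ∈ wedge e e' → r.1 ≤ v.1 := by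
  classical
  obtain ⟨v, hv, hvw⟩ := h.exists_mem_wedge hD he
  obtain ⟨r, hr, hmin⟩ := exists_min_image {v ∈ V | v ∈ wedge e e'} Prod.fst
    ⟨v, mem_filter.2 ⟨hv, hvw⟩⟩
  obtain ⟨hrV, hrw⟩ := mem_filter.1 hr
  exact ⟨r, hrV, hrw, fun v hv hvw ↦ hmin v (mem_filter.2 ⟨hv, hvw⟩)⟩

end IsNextAbove

namespace IsPlaneDrawing

lemma eq_of_apply_eq {x : K} (hD : IsPlaneDrawing V E) (he : e ∈ E) (hg : g ∈ E)
    (hxe : x ∈ Set.Ioo e.left e.right) (hxg : x ∈ Set.Ioo g.left g.right)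
    (hx : e.line x = g.line x) : e = g := by
  by_contra hne
  exact hD.not_crosses e he g hg (Edge.crosses_of_apply_eq hne hxe hxg hx)

lemma card_le_of_uppermostBelow {F : Finset (Edge K)} (hD : IsPlaneDrawing V E) (hF : F ⊆ E)
    (h : ∀ e ∈ F, ∃ v ∈ V, UppermostBelow E v e) : #F ≤ #V := by
  refine card_le_card_of_forall_subsingleton (fun e v ↦ UppermostBelow E v e) h ?_
  rintro v - e ⟨he, hev, hmax⟩ g ⟨hg, hgv, hmax'⟩
  exact hD.eq_of_apply_eq (hF he) (hF hg) hev.1 hgv.1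
    (le_antisymm (hmax' e (hF he) hev) (hmax g (hF hg) hgv))

variable [IsStrictOrderedRing K]

lemma apply_le_apply_of_lt {u w : K} (hD : IsPlaneDrawing V E) (he : e ∈ E) (hg : g ∈ E)
    (huw : u < w) (hu : max e.left g.left ≤ u) (hw : w ≤ min e.right g.right)
    (h : e.line w < g.line w) : e.line u ≤ g.line u := by
  by_contra! hlt
  obtain ⟨y, hy, hey⟩ := NonVerticalLine.exists_mem_Ioo_apply_eq huw hlt h
  obtain ⟨hue, hug⟩ := max_le_iff.1 hu
  obtain ⟨hwe, hwg⟩ := le_min_iff.1 hw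
  have heg : e = g := hD.eq_of_apply_eq he hg ⟨hue.trans_lt hy.1, hy.2.trans_le hwe⟩
    ⟨hug.trans_lt hy.1, hy.2.trans_le hwg⟩ hey
  exact h.ne (by rw [heg])

lemma apply_lt_apply_of_lt {u w : K} (hD : IsPlaneDrawing V E) (he : e ∈ E) (hg : g ∈ E)
    (huw : u < w) (hu : max e.left g.left < u) (hw : w ≤ min e.right g.right)
    (h : e.line w < g.line w) : e.line u < g.line u := by
  refine (hD.apply_le_apply_of_lt he hg huw hu.le hw h).lt_of_ne fun heq ↦ h.ne ?_
  obtain ⟨hue, hug⟩ := max_lt_iff.1 hu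
  obtain ⟨hwe, hwg⟩ := le_min_iff.1 hw
  rw [hD.eq_of_apply_eq he hg ⟨hue, huw.trans_le hwe⟩ ⟨hug, huw.trans_le hwg⟩ heq]

lemma eq_of_leftPt_eq_of_slope_eq (hD : IsPlaneDrawing V E) (he : e ∈ E) (hg : g ∈ E)
    (hl : e.leftPt = g.leftPt) (hs : e.line.slope = g.line.slope) : e = g := by
  have hleft : e.left = g.left := congrArg Prod.fst hl
  have happly : e.line e.left = g.line e.left := by
    conv_rhs => rw [hleft]
    exact congrArg Prod.snd hl
  have hline : e.line = g.line := NonVerticalLine.eq_of_slope_eq_of_apply_eq hs happly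
  obtain ⟨x, hx, hx'⟩ := exists_between (lt_min e.left_lt_right (hleft ▸ g.left_lt_right))
  obtain ⟨hxe, hxg⟩ := lt_min_iff.1 hx'
  exact hD.eq_of_apply_eq he hg ⟨hx, hxe⟩ ⟨hleft ▸ hx, hxg⟩ (by rw [hline])

lemma eq_of_rightPt_eq_of_slope_eq (hD : IsPlaneDrawing V E) (he : e ∈ E) (hg : g ∈ E)
    (hr : e.rightPt = g.rightPt) (hs : e.line.slope = g.line.slope) : e = g := by
  have hright : e.right = g.right := congrArg Prod.fst hr
  have happly : e.line e.right = g.line e.right := by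
    conv_rhs => rw [hright]
    exact congrArg Prod.snd hr
  have hline : e.line = g.line := NonVerticalLine.eq_of_slope_eq_of_apply_eq hs happly
  obtain ⟨x, hx', hx⟩ := exists_between (max_lt e.left_lt_right (hright ▸ g.left_lt_right))
  obtain ⟨hxe, hxg⟩ := max_lt_iff.1 hx'
  exact hD.eq_of_apply_eq he hg ⟨hxe, hx⟩ ⟨hxg, hright ▸ hx⟩ (by rw [hline])

lemma card_le_of_uppermostAtLeft {F : Finset (Edge K)} (hD : IsPlaneDrawing V E) (hF : F ⊆ E)
    (h : ∀ e ∈ F, UppermostAtLeft E e) : #F ≤ #V := by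
  refine card_le_card_of_injOn Edge.leftPt (fun e he ↦ hD.leftPt_mem e (hF he)) ?_
  intro e he g hg heg
  exact hD.eq_of_leftPt_eq_of_slope_eq (hF he) (hF hg) heg
    (le_antisymm (h g hg e (hF he) heg) (h e he g (hF hg) heg.symm))

lemma card_le_of_uppermostAtRight {F : Finset (Edge K)} (hD : IsPlaneDrawing V E) (hF : F ⊆ E)
    (h : ∀ e ∈ F, UppermostAtRight E e) : #F ≤ #V := by
  refine card_le_card_of_injOn Edge.rightPt (fun e he ↦ hD.rightPt_mem e (hF he)) ?_
  intro e he g hg heg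
  exact hD.eq_of_rightPt_eq_of_slope_eq (hF he) (hF hg) heg
    (le_antisymm (h e he g (hF hg) heg.symm) (h g hg e (hF he) heg))

/- Followed to the left, an edge strictly inside the wedge can neither leave it nor pass through its
apex, so it would have to start inside, at a vertex. -/
lemma not_between_of_isNextAbove {x X : K} (hD : IsPlaneDrawing V E) (he : e ∈ E)
    (h : IsNextAbove E e e') (hX : X ≤ min e.right e'.right)
    (hfirst : ∀ v ∈ V, v ∈ wedge e e' → X ≤ v.1) (hg : g ∈ E) (hex : e.left < x) (hxX : x ≤ X)
    (hxg : x ∈ Set.Ioo g.left g.right) :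
    ¬ (e.line x < g.line x ∧ g.line x < e'.line x) := by
  rintro ⟨hlow, hhigh⟩
  obtain ⟨hxe, hxe'⟩ := le_min_iff.1 (hxX.trans hX)
  have stays_inside : ∀ u, e.left ≤ u → g.left ≤ u → u < x →
      e.line u ≤ g.line u ∧ g.line u ≤ e'.line u := fun u hu hgu hux ↦
    ⟨hD.apply_le_apply_of_lt he hg hux (max_le hu hgu) (le_min hxe hxg.2.le) hlow,
      hD.apply_le_apply_of_lt hg h.mem hux (max_le hgu (h.left_eq ▸ hu))
        (le_min hxg.2.le hxe') hhigh⟩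
  have starts_at_or_before : g.left ≤ e.left := by
    by_contra! hlt
    have hmem : g.leftPt ∈ wedge e e' :=
      ⟨⟨hlt, hxg.1.le.trans (hxX.trans hX)⟩, stays_inside g.left hlt.le le_rfl hxg.1⟩
    exact (hxg.1.trans_le hxX).not_ge (hfirst _ (hD.leftPt_mem g hg) hmem)
  have through_apex : e.line e.left = g.line e.left := by
    obtain ⟨hle, hge⟩ := stays_inside e.left le_rfl starts_at_or_before hex
    exact le_antisymm hle (h.apply_left_eq ▸ hge)
  rcases starts_at_or_before.lt_or_eq with hlt | heq
  · exact hD.notMem_interior g hg e.leftPt (hD.leftPt_mem e he)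
      ⟨⟨hlt, hex.trans hxg.2⟩, through_apex⟩
  · have hleft : g.leftPt = e.leftPt := by
      simp only [Edge.leftPt, heq, through_apex]
    have hslope : e.line.slope < g.line.slope :=
      (NonVerticalLine.apply_lt_apply_iff_of_lt_of_apply_eq hex through_apex).1 hlow
    have hslope' : g.line.slope < e'.line.slope :=
      (NonVerticalLine.apply_lt_apply_iff_of_lt_of_apply_eq hex
        (through_apex.symm.trans h.apply_left_eq)).1 hhigh
    exact hslope'.not_ge (h.slope_le g hg hleft hslope)

/- The first vertex `r` inside the wedge above `e` lies either above the interior of `e`, and then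
`e` is uppermost below `r`, or above the right endpoint of `e`, and then `e` is uppermost there. -/
lemma uppermostAtRight_or_exists_uppermostBelow (hD : IsPlaneDrawing V E) (he : e ∈ E)
    (h : ¬ UppermostAtLeft E e) :
    UppermostAtRight E e ∨ ∃ v ∈ V, UppermostBelow E v e := by
  obtain ⟨e', hnext⟩ := exists_isNextAbove h
  obtain ⟨r, hrV, ⟨⟨hr, hrX⟩, hle, hle'⟩, hfirst⟩ := hnext.exists_first_mem_wedge hD.toIsDrawing he
  obtain ⟨hre, hre'⟩ := le_min_iff.1 hrX
  rcases hre.lt_or_eq with hlt | heq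
  · refine .inr ⟨r, hrV, ⟨⟨hr, hlt⟩, hle.lt_of_ne fun h ↦ ?_⟩, fun g hg hgr ↦ ?_⟩
    · exact hD.notMem_interior e he r hrV ⟨⟨hr, hlt⟩, h.symm⟩
    · by_contra! hgt
      exact hD.not_between_of_isNextAbove he hnext hrX hfirst hg hr le_rfl hgr.1
        ⟨hgt, hgr.2.trans_le hle'⟩
  · refine .inl fun g hg hgr ↦ ?_
    by_contra! hgt
    have hright : g.right = e.right := congrArg Prod.fst hgr
    have happly : g.line e.right = e.line e.right := by
      conv_lhs => rw [← hright]
      exact congrArg Prod.snd hgr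
    obtain ⟨x, hx, hxr⟩ := exists_between (max_lt e.left_lt_right (hright ▸ g.left_lt_right))
    obtain ⟨hex, hgx⟩ := max_lt_iff.1 hx
    have hlow : e.line x < g.line x :=
      (NonVerticalLine.apply_lt_apply_iff_of_gt_of_apply_eq hxr happly.symm).2 hgt
    have hhigh : g.line x < e'.line x := by
      refine hD.apply_lt_apply_of_lt hg hnext.mem hxr ?_ ?_
        (happly.trans_lt (hnext.apply_lt_apply e.left_lt_right))
      · exact max_lt hgx (hnext.left_eq ▸ hex)
      · exact le_min hright.ge (heq ▸ hre')
    exact hD.not_between_of_isNextAbove he hnext hrX hfirst hg hex (heq ▸ hxr.le)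
      ⟨hgx, hright ▸ hxr⟩ ⟨hlow, hhigh⟩

theorem card_edges_le (hD : IsPlaneDrawing V E) : #E ≤ 3 * #V := by
  classical
  let atLeft := {e ∈ E | UppermostAtLeft E e}
  let atRight := {e ∈ E | UppermostAtRight E e}
  let below := {e ∈ E | ∃ v ∈ V, UppermostBelow E v e}
  have hcover : E ⊆ atLeft ∪ (atRight ∪ below) := by
    intro e he
    by_cases h : UppermostAtLeft E e
    · simp [atLeft, he, h]
    · simpa [atLeft, atRight, below, he, h] using
        hD.uppermostAtRight_or_exists_uppermostBelow he h
  have hLeft : #atLeft ≤ #V :=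
    hD.card_le_of_uppermostAtLeft (filter_subset _ E) fun e he ↦ (mem_filter.1 he).2
  have hRight : #atRight ≤ #V :=
    hD.card_le_of_uppermostAtRight (filter_subset _ E) fun e he ↦ (mem_filter.1 he).2
  have hBelow : #below ≤ #V :=
    hD.card_le_of_uppermostBelow (filter_subset _ E) fun e he ↦ (mem_filter.1 he).2
  calc #E ≤ #(atLeft ∪ (atRight ∪ below)) := card_le_card hcover
    _ ≤ #atLeft + (#atRight + #below) :=
      (card_union_le _ _).trans (by gcongr; exact card_union_le _ _)
    _ ≤ 3 * #V := by omega

end IsPlaneDrawing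

/-! ### Random subsets -/

section RandomSubset

variable {α β R : Type*} [CommRing R]

/-- The probability of drawing `A ⊆ V` when each element of `V` is kept independently with
probability `p`. -/
def sampleWeight (p : R) (V A : Finset α) : R := p ^ #A * (1 - p) ^ (#V - #A)

section DecidableEq

variable [DecidableEq α]

lemma sum_sampleWeight_Icc (p : R) {B V : Finset α} (h : B ⊆ V) :
    ∑ A ∈ Icc B V, sampleWeight p V A = p ^ #B := by
  have hcard : ∀ A ∈ (V \ B).powerset, #(B ∪ A) = #B + #A := fun A hA ↦
    card_union_of_disjoint (disjoint_sdiff.mono_right (mem_powerset.1 hA))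
  have hinj : Set.InjOn (B ∪ ·) ((V \ B).powerset : Set (Finset α)) :=
    fun A hA A' hA' (hAA' : B ∪ A = B ∪ A') ↦ by
      rw [mem_coe, mem_powerset] at hA hA'
      rw [← union_sdiff_cancel_left (disjoint_sdiff.mono_right hA), hAA',
        union_sdiff_cancel_left (disjoint_sdiff.mono_right hA')]
  calc ∑ A ∈ Icc B V, sampleWeight p V A
      = ∑ A ∈ (V \ B).powerset, sampleWeight p V (B ∪ A) := by
        rw [Icc_eq_image_powerset h, sum_image hinj]
    _ = ∑ A ∈ (V \ B).powerset, p ^ #B * (p ^ #A * (1 - p) ^ (#(V \ B) - #A)) :=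
        sum_congr rfl fun A hA ↦ by
          rw [sampleWeight, hcard A hA, card_sdiff_of_subset h, pow_add, mul_assoc, Nat.sub_sub]
    _ = p ^ #B := by
        rw [← mul_sum, sum_pow_mul_eq_add_pow, add_sub_cancel, one_pow, mul_one]

lemma sum_sampleWeight_mul_card_filter_subset (p : R) (V : Finset α) {T : Finset β}
    {f : β → Finset α} (hf : ∀ b ∈ T, f b ⊆ V) :
    ∑ A ∈ V.powerset, sampleWeight p V A * #{b ∈ T | f b ⊆ A} = ∑ b ∈ T, p ^ #(f b) := by
  calc ∑ A ∈ V.powerset, sampleWeight p V A * #{b ∈ T | f b ⊆ A}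
      = ∑ A ∈ V.powerset, ∑ b ∈ T, if f b ⊆ A then sampleWeight p V A else 0 :=
        sum_congr rfl fun A _ ↦ by rw [← sum_filter, sum_const, nsmul_eq_mul, mul_comm]
    _ = ∑ b ∈ T, ∑ A ∈ Icc (f b) V, sampleWeight p V A := by
        rw [sum_comm]
        refine sum_congr rfl fun b _ ↦ ?_
        rw [← sum_filter]
        exact sum_congr (by ext A; simp [and_comm]) fun _ _ ↦ rfl
    _ = ∑ b ∈ T, p ^ #(f b) := sum_congr rfl fun b hb ↦ sum_sampleWeight_Icc p (hf b hb)

end DecidableEq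

lemma sum_sampleWeight_mul_card (p : R) (V : Finset α) :
    ∑ A ∈ V.powerset, sampleWeight p V A * #A = p * #V := by
  classical
  calc ∑ A ∈ V.powerset, sampleWeight p V A * #A
      = ∑ A ∈ V.powerset, sampleWeight p V A * #{v ∈ V | {v} ⊆ A} :=
        sum_congr rfl fun A hA ↦ by
          simp only [singleton_subset_iff, filter_mem_eq_inter,
            inter_eq_right.2 (mem_powerset.1 hA)]
    _ = ∑ v ∈ V, p ^ #{v} :=
        sum_sampleWeight_mul_card_filter_subset p V fun v hv ↦ singleton_subset_iff.2 hv
    _ = p * #V := by simp [mul_comm]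

end RandomSubset

/-! ### The crossing lemma -/

open Classical in
/-- The set of ordered pairs of crossing edges. -/
noncomputable def crossings (E : Finset (Edge K)) : Finset (Edge K × Edge K) :=
  {p ∈ E ×ˢ E | p.1.Crosses p.2}

lemma mem_crossings {p : Edge K × Edge K} :
    p ∈ crossings E ↔ p.1 ∈ E ∧ p.2 ∈ E ∧ p.1.Crosses p.2 := by
  simp [crossings, and_assoc]

namespace IsDrawing

lemma left_le_left_of_line_eq {x : K} (hD : IsDrawing V E) (he : e ∈ E) (hg : g ∈ E)
    (hline : e.line = g.line) (hxe : x ∈ Set.Ioo e.left e.right)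
    (hxg : x ∈ Set.Ioo g.left g.right) : g.left ≤ e.left := by
  by_contra! hlt
  exact hD.notMem_interior e he g.leftPt (hD.leftPt_mem g hg)
    ⟨⟨hlt, hxg.1.trans hxe.2⟩, by rw [hline]; rfl⟩

lemma right_le_right_of_line_eq {x : K} (hD : IsDrawing V E) (he : e ∈ E) (hg : g ∈ E)
    (hline : e.line = g.line) (hxe : x ∈ Set.Ioo e.left e.right)
    (hxg : x ∈ Set.Ioo g.left g.right) : e.right ≤ g.right := by
  by_contra! hlt
  exact hD.notMem_interior e he g.rightPt (hD.rightPt_mem g hg)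
    ⟨⟨hxe.1.trans hxg.2, hlt⟩, by rw [hline]; rfl⟩

lemma eq_of_line_eq {x : K} (hD : IsDrawing V E) (he : e ∈ E) (hg : g ∈ E)
    (hline : e.line = g.line) (hxe : x ∈ Set.Ioo e.left e.right)
    (hxg : x ∈ Set.Ioo g.left g.right) : e = g :=
  Edge.ext hline
    (le_antisymm (hD.left_le_left_of_line_eq hg he hline.symm hxg hxe)
      (hD.left_le_left_of_line_eq he hg hline hxe hxg))
    (le_antisymm (hD.right_le_right_of_line_eq he hg hline hxe hxg)
      (hD.right_le_right_of_line_eq hg he hline.symm hxg hxe))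

lemma line_ne_of_crosses (hD : IsDrawing V E) (he : e ∈ E) (hg : g ∈ E) (h : e.Crosses g) :
    e.line ≠ g.line := by
  obtain ⟨hne, v, hve, hvg⟩ := h
  exact fun hline ↦ hne (hD.eq_of_line_eq he hg hline hve.1 hvg.1)

lemma disjoint_endpoints_of_crosses (hD : IsDrawing V E) (he : e ∈ E) (hg : g ∈ E)
    (h : e.Crosses g) : Disjoint e.endpoints g.endpoints := by
  refine disjoint_left.2 fun v hve hvg ↦ hD.line_ne_of_crosses he hg h ?_
  obtain ⟨-, w, hwe, hwg⟩ := h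
  have hvw : v.1 ≠ w.1 := fun h ↦ Edge.fst_notMem_Ioo_of_mem_endpoints hve (h ▸ hwe.1)
  exact NonVerticalLine.eq_of_apply_eq_of_apply_eq hvw
    ((Edge.snd_eq_apply_of_mem_endpoints hve).symm.trans (Edge.snd_eq_apply_of_mem_endpoints hvg))
    (hwe.2.symm.trans hwg.2)

lemma card_endpoints_union (hD : IsDrawing V E) {p : Edge K × Edge K} (hp : p ∈ crossings E) :
    #(p.1.endpoints ∪ p.2.endpoints) = 4 := by
  obtain ⟨he, hg, h⟩ := mem_crossings.1 hp
  rw [card_union_of_disjoint (hD.disjoint_endpoints_of_crosses he hg h), Edge.card_endpoints,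
    Edge.card_endpoints]

lemma endpoints_subset (hD : IsDrawing V E) (he : e ∈ E) : e.endpoints ⊆ V :=
  insert_subset (hD.leftPt_mem e he) (singleton_subset_iff.2 (hD.rightPt_mem e he))

lemma endpoints_union_subset (hD : IsDrawing V E) {p : Edge K × Edge K} (hp : p ∈ crossings E) :
    p.1.endpoints ∪ p.2.endpoints ⊆ V :=
  union_subset (hD.endpoints_subset (mem_crossings.1 hp).1)
    (hD.endpoints_subset (mem_crossings.1 hp).2.1)

lemma mono_right {F : Finset (Edge K)} (hD : IsDrawing V E) (hF : F ⊆ E) : IsDrawing V F where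
  leftPt_mem e he := hD.leftPt_mem e (hF he)
  rightPt_mem e he := hD.rightPt_mem e (hF he)
  notMem_interior e he := hD.notMem_interior e (hF he)

lemma induce {A : Finset (K × K)} (hD : IsDrawing V E) (hA : A ⊆ V) :
    IsDrawing A {e ∈ E | e.endpoints ⊆ A} where
  leftPt_mem _ he := (mem_filter.1 he).2 (mem_insert_self _ _)
  rightPt_mem _ he := (mem_filter.1 he).2 (mem_insert_of_mem (mem_singleton_self _))
  notMem_interior e he v hv := hD.notMem_interior e (mem_filter.1 he).1 v (hA hv)

end IsDrawing

lemma crossings_filter_endpoints_subset (E : Finset (Edge K)) (A : Finset (K × K)) :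
    crossings {e ∈ E | e.endpoints ⊆ A} =
      {p ∈ crossings E | p.1.endpoints ∪ p.2.endpoints ⊆ A} := by
  ext p
  simp only [mem_crossings, mem_filter, union_subset_iff]
  tauto

namespace IsDrawing

variable [IsStrictOrderedRing K]

lemma card_edges_le_add_card_crossings (hD : IsDrawing V E) :
    #E ≤ 3 * #V + #(crossings E) := by
  classical
  let crossing := {e ∈ E | ∃ g ∈ E, e.Crosses g}
  have hplane : IsPlaneDrawing V (E \ crossing) :=
    { hD.mono_right sdiff_subset with
      not_crosses := fun e he g hg h ↦
        (mem_sdiff.1 he).2 (mem_filter.2 ⟨(mem_sdiff.1 he).1, g, (mem_sdiff.1 hg).1, h⟩) }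
  have hcrossing : crossing ⊆ (crossings E).image Prod.fst := fun e he ↦ by
    obtain ⟨heE, g, hg, h⟩ := mem_filter.1 he
    exact mem_image.2 ⟨(e, g), mem_crossings.2 ⟨heE, hg, h⟩, rfl⟩
  calc #E = #(E \ crossing) + #crossing := (card_sdiff_add_card_eq_card (filter_subset _ E)).symm
    _ ≤ 3 * #V + #(crossings E) :=
      add_le_add hplane.card_edges_le ((card_le_card hcrossing).trans card_image_le)

lemma sq_mul_card_edges_le {R : Type*} [CommRing R] [LinearOrder R] [IsStrictOrderedRing R]
    (hD : IsDrawing V E) {p : R} (hp₀ : 0 ≤ p) (hp₁ : p ≤ 1) :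
    p ^ 2 * #E ≤ 3 * p * #V + p ^ 4 * #(crossings E) := by
  have hedges : ∑ A ∈ V.powerset, sampleWeight p V A * #{e ∈ E | e.endpoints ⊆ A} =
      p ^ 2 * #E := by
    rw [sum_sampleWeight_mul_card_filter_subset p V fun e he ↦ hD.endpoints_subset he]
    simp [Edge.card_endpoints, mul_comm]
  have hcrossings :
      ∑ A ∈ V.powerset, sampleWeight p V A * #(crossings {e ∈ E | e.endpoints ⊆ A}) =
        p ^ 4 * #(crossings E) := by
    simp only [crossings_filter_endpoints_subset]
    rw [sum_sampleWeight_mul_card_filter_subset p V fun q hq ↦ hD.endpoints_union_subset hq,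
      sum_congr rfl fun q hq ↦ by rw [hD.card_endpoints_union hq], sum_const, nsmul_eq_mul,
      mul_comm]
  rw [← hedges, ← hcrossings, mul_assoc, ← sum_sampleWeight_mul_card, mul_sum, ← sum_add_distrib]
  refine sum_le_sum fun A hA ↦ ?_
  have hweight : 0 ≤ sampleWeight p V A :=
    mul_nonneg (pow_nonneg hp₀ _) (pow_nonneg (sub_nonneg.2 hp₁) _)
  have hA : (#{e ∈ E | e.endpoints ⊆ A} : R) ≤
      3 * #A + #(crossings {e ∈ E | e.endpoints ⊆ A}) := by
    exact_mod_cast (hD.induce (mem_powerset.1 hA)).card_edges_le_add_card_crossings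
  linarith [mul_le_mul_of_nonneg_left hA hweight]

theorem card_edges_pow_three_le (hD : IsDrawing V E) (h : 6 * #V ≤ #E) :
    #E ^ 3 ≤ 72 * #V ^ 2 * #(crossings E) := by
  rcases E.eq_empty_or_nonempty with rfl | hE
  · simp
  have hv : (0 : ℚ) < #V := by
    obtain ⟨e, he⟩ := hE
    exact_mod_cast card_pos.2 ⟨_, hD.leftPt_mem e he⟩
  have he : (0 : ℚ) < #E := by exact_mod_cast hE.card_pos
  have hp₁ : 6 * (#V : ℚ) / #E ≤ 1 := (div_le_one he).2 (by exact_mod_cast h)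
  have hsample := hD.sq_mul_card_edges_le (by positivity) hp₁
  have hle : (#E : ℚ) ^ 3 ≤ 72 * #V ^ 2 * #(crossings E) := by
    field_simp at hsample
    linarith
  exact_mod_cast hle

end IsDrawing

/-! ### Cutting lines at points -/

section ConsecutiveEdges

variable {S : Finset (K × K)} {L : Finset (NonVerticalLine K)} {l : NonVerticalLine K} {t : ℕ}

lemma finite_setOf_endpoints_mem (S : Finset (K × K)) (L : Finset (NonVerticalLine K)) :
    {e : Edge K | e.line ∈ L ∧ e.leftPt ∈ S ∧ e.rightPt ∈ S}.Finite := by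
  refine Set.Finite.of_injOn (f := fun e ↦ (e.line, e.leftPt, e.rightPt))
    (t := L ×ˢ S ×ˢ S) (fun e he ↦ ?_) (fun e _ g _ heg ↦ ?_) ?_
  · simpa using he
  · simp only [Prod.mk.injEq, Edge.leftPt, Edge.rightPt] at heg
    exact Edge.ext heg.1 heg.2.1.1 heg.2.2.1
  · exact L.finite_toSet.prod (S.finite_toSet.prod S.finite_toSet)

/-- The segments joining two consecutive points of `S` on a line of `L`. -/
noncomputable def consecutiveEdges (S : Finset (K × K)) (L : Finset (NonVerticalLine K)) :
    Finset (Edge K) :=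
  Set.Finite.toFinset (s := {e : Edge K | (e.line ∈ L ∧ e.leftPt ∈ S ∧ e.rightPt ∈ S) ∧
    ∀ v ∈ S, v ∉ e.interior}) ((finite_setOf_endpoints_mem S L).subset fun _ ↦ And.left)

lemma mem_consecutiveEdges : e ∈ consecutiveEdges S L ↔
    (e.line ∈ L ∧ e.leftPt ∈ S ∧ e.rightPt ∈ S) ∧ ∀ v ∈ S, v ∉ e.interior := by
  simp [consecutiveEdges]

lemma isDrawing_consecutiveEdges (S : Finset (K × K)) (L : Finset (NonVerticalLine K)) :
    IsDrawing S (consecutiveEdges S L) where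
  leftPt_mem _ he := (mem_consecutiveEdges.1 he).1.2.1
  rightPt_mem _ he := (mem_consecutiveEdges.1 he).1.2.2
  notMem_interior _ he := (mem_consecutiveEdges.1 he).2

lemma exists_mem_consecutiveEdges_leftPt_eq {p q : K × K} (hl : l ∈ L) (hp : p ∈ S)
    (hpl : p.2 = l p.1) (hq : q ∈ S) (hql : q.2 = l q.1) (hpq : p.1 < q.1) :
    ∃ e ∈ consecutiveEdges S L, e.line = l ∧ e.leftPt = p := by
  obtain ⟨r, hr, hmin⟩ := exists_min_image {v ∈ S | v.2 = l v.1 ∧ p.1 < v.1} Prod.fst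
    ⟨q, by simp [hq, hql, hpq]⟩
  obtain ⟨hrS, hrl, hpr⟩ := mem_filter.1 hr
  refine ⟨⟨l, p.1, r.1, hpr⟩, mem_consecutiveEdges.2 ⟨⟨hl, ?_, ?_⟩, fun v hv hvi ↦ ?_⟩, rfl, ?_⟩
  · rwa [Edge.leftPt, ← hpl]
  · rwa [Edge.rightPt, ← hrl]
  · exact (hmin v (mem_filter.2 ⟨hv, hvi.2, hvi.1.1⟩)).not_gt hvi.1.2
  · rw [Edge.leftPt, ← hpl]

lemma card_sub_one_le_card_filter_line_eq [DecidableEq (NonVerticalLine K)] (hl : l ∈ L) :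
    #{p ∈ S | p.2 = l p.1} - 1 ≤ #{e ∈ consecutiveEdges S L | e.line = l} := by
  rcases ({p ∈ S | p.2 = l p.1}).eq_empty_or_nonempty with h | h
  · simp [h]
  obtain ⟨q, hq, hmax⟩ := exists_max_image _ Prod.fst h
  obtain ⟨hqS, hql⟩ := mem_filter.1 hq
  have hsub : ({p ∈ S | p.2 = l p.1}).erase q ⊆
      ({e ∈ consecutiveEdges S L | e.line = l}).image Edge.leftPt := fun p hp ↦ by
    obtain ⟨hpq, hp⟩ := mem_erase.1 hp
    obtain ⟨hpS, hpl⟩ := mem_filter.1 hp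
    have hlt : p.1 < q.1 := (hmax p hp).lt_of_ne fun h ↦
      hpq (Prod.ext h (by rw [hpl, hql, h]))
    obtain ⟨e, he, hel, hep⟩ := exists_mem_consecutiveEdges_leftPt_eq hl hpS hpl hqS hql hlt
    exact mem_image.2 ⟨e, mem_filter.2 ⟨he, hel⟩, hep⟩
  rw [← card_erase_of_mem hq]
  exact (card_le_card hsub).trans card_image_le

lemma card_mul_le_two_mul_card_consecutiveEdges (ht : 2 ≤ t)
    (h : ∀ l ∈ L, t ≤ #{p ∈ S | p.2 = l p.1}) : #L * t ≤ 2 * #(consecutiveEdges S L) := by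
  classical
  have hcount : (t - 1) * #L ≤ #(consecutiveEdges S L) :=
    mul_card_image_le_card_of_maps_to (f := Edge.line)
      (fun e he ↦ (mem_consecutiveEdges.1 he).1.1) (t - 1) fun l hl ↦
        (Nat.sub_le_sub_right (h l hl) 1).trans (card_sub_one_le_card_filter_line_eq hl)
  calc #L * t ≤ #L * (2 * (t - 1)) := by gcongr; omega
    _ = 2 * ((t - 1) * #L) := by ring
    _ ≤ 2 * #(consecutiveEdges S L) := by gcongr

lemma card_crossings_consecutiveEdges_le (S : Finset (K × K)) (L : Finset (NonVerticalLine K)) :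
    #(crossings (consecutiveEdges S L)) ≤ #L ^ 2 := by
  have hD := isDrawing_consecutiveEdges S L
  rw [sq, ← card_product]
  refine card_le_card_of_injOn (fun p ↦ (p.1.line, p.2.line)) (fun p hp ↦ ?_) ?_
  · obtain ⟨he, hg, -⟩ := mem_crossings.1 hp
    exact mem_product.2 ⟨(mem_consecutiveEdges.1 he).1.1, (mem_consecutiveEdges.1 hg).1.1⟩
  · intro p hp q hq hpq
    obtain ⟨hpe, hpg, hcross⟩ := mem_crossings.1 hp
    obtain ⟨hqe, hqg, -, w, hwe, hwg⟩ := mem_crossings.1 hq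
    obtain ⟨-, v, hve, hvg⟩ := id hcross
    obtain ⟨he, hg⟩ : p.1.line = q.1.line ∧ p.2.line = q.2.line := Prod.ext_iff.1 hpq
    have hvw : v.1 = w.1 := by
      by_contra hne
      exact hD.line_ne_of_crosses hpe hpg hcross
        (NonVerticalLine.eq_of_apply_eq_of_apply_eq hne (hve.2.symm.trans hvg.2)
          (by rw [he, hg, ← hwe.2, ← hwg.2]))
    exact Prod.ext (hD.eq_of_line_eq hpe hqe he hve.1 (hvw ▸ hwe.1))
      (hD.eq_of_line_eq hpg hqg hg hvg.1 (hvw ▸ hwg.1))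

lemma card_mul_pow_three_le_or_card_mul_le [IsStrictOrderedRing K] (ht : 2 ≤ t)
    (h : ∀ l ∈ L, t ≤ #{p ∈ S | p.2 = l p.1}) :
    #L * t ^ 3 ≤ 576 * #S ^ 2 ∨ #L * t ≤ 12 * #S := by
  have hedges := card_mul_le_two_mul_card_consecutiveEdges ht h
  rcases le_or_gt (6 * #S) #(consecutiveEdges S L) with hmany | hfew
  · rcases L.eq_empty_or_nonempty with rfl | hL
    · simp
    refine .inl (Nat.le_of_mul_le_mul_right ?_ (pow_pos hL.card_pos 2))
    calc #L * t ^ 3 * #L ^ 2 = (#L * t) ^ 3 := by ring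
      _ ≤ (2 * #(consecutiveEdges S L)) ^ 3 := by gcongr
      _ = 8 * #(consecutiveEdges S L) ^ 3 := by ring
      _ ≤ 8 * (72 * #S ^ 2 * #(crossings (consecutiveEdges S L))) := by
        gcongr
        exact (isDrawing_consecutiveEdges S L).card_edges_pow_three_le hmany
      _ ≤ 8 * (72 * #S ^ 2 * #L ^ 2) := by gcongr; exact card_crossings_consecutiveEdges_le S L
      _ = 576 * #S ^ 2 * #L ^ 2 := by ring
  · exact .inr (by omega)

theorem card_le_of_forall_le_card_filter [IsStrictOrderedRing K] (ht : 2 ≤ t)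
    (h : ∀ l ∈ L, t ≤ #{p ∈ S | p.2 = l p.1}) :
    (#L : ℝ) ≤ 576 * ((#S : ℝ) ^ 2 / (t : ℝ) ^ 3 + (#S : ℝ) / t) := by
  have ht₀ : (0 : ℝ) < t := by positivity
  rw [mul_add, ← mul_div_assoc, ← mul_div_assoc]
  rcases card_mul_pow_three_le_or_card_mul_le ht h with hcube | hlin
  · have hmain : (#L : ℝ) ≤ 576 * #S ^ 2 / t ^ 3 :=
      (le_div_iff₀ (pow_pos ht₀ 3)).2 (by exact_mod_cast hcube)
    exact hmain.trans (le_add_of_nonneg_right (by positivity))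
  · have hmain : (#L : ℝ) ≤ 576 * #S / t :=
      (le_div_iff₀ ht₀).2 (by exact_mod_cast hlin.trans (by omega))
    exact hmain.trans (le_add_of_nonneg_left (by positivity))

end ConsecutiveEdges

end SzemerediTrotter

open SzemerediTrotter Finset in
theorem szemeredi_trotter_rich_lines_general {K V P : Type*} [Field K] [LinearOrder K]
    [IsStrictOrderedRing K] [AddCommGroup V] [Module K V] [AddTorsor V P] (S : Finset P) {t : ℕ}
    (ht : 2 ≤ t) :
    ((richLines K S t).ncard : ℝ) ≤
      576 * ((S.card : ℝ) ^ 2 / (t : ℝ) ^ 3 + (S.card : ℝ) / (t : ℝ)) := by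
  classical
  obtain ⟨φ, graph, hφ, hinj, hgraph⟩ := exists_coordinates_richLines (K := K) S ht
  have := (finite_richLines (K := K) S ht).fintype
  have hrich : ∀ l ∈ univ.image graph, t ≤ #{p ∈ S.image φ | p.2 = l p.1} := by
    intro l hl
    obtain ⟨ℓ, -, rfl⟩ := mem_image.1 hl
    rw [filter_image, card_image_of_injOn (hφ.mono (filter_subset _ S)),
      ← filter_congr (hgraph ℓ), ← Set.ncard_coe_finset, coe_filter]
    exact ℓ.2.2
  have hcard := card_le_of_forall_le_card_filter ht hrich
  rwa [card_image_of_injective _ hinj, card_univ, ← Nat.card_eq_fintype_card, Nat.card_coe_set_eq,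
    card_image_of_injOn hφ] at hcard

/-- Rich-lines corollary of the Szemerédi–Trotter theorem: there is an absolute constant
`C > 0` such that for every finite `S ⊆ ℝ²` and every integer `t ≥ 2`, the number of lines
containing at least `t` points of `S` is at most `C·(|S|²/t³ + |S|/t)`. -/
theorem szemeredi_trotter_rich_lines :
    ∃ C : ℝ, 0 < C ∧
      ∀ (S : Finset (EuclideanSpace ℝ (Fin 2))) (t : ℕ), 2 ≤ t →
        (({ℓ : AffineSubspace ℝ (EuclideanSpace ℝ (Fin 2)) |
            (∃ p q : EuclideanSpace ℝ (Fin 2), p ≠ q ∧ ℓ = affineSpan ℝ ({p, q} : Set _)) ∧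
            t ≤ ({x ∈ (S : Set (EuclideanSpace ℝ (Fin 2))) | x ∈ ℓ}).ncard}).ncard : ℝ) ≤
          C * ((S.card : ℝ) ^ 2 / (t : ℝ) ^ 3 + (S.card : ℝ) / (t : ℝ)) :=
  ⟨576, by norm_num, fun S _ ht ↦ szemeredi_trotter_rich_lines_general S ht⟩
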